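/- Let C be an oriented closed immersed curve in ℝ² with only transverse double-point self-intersections and with index 1 − 2g for some g ≥ 1. Then the total number of self-intersections of C is at least 2g − 2. -/

import Mathlib

open scoped Manifold Topology
open Set

noncomputable section

/-- The determinant (cross product) of two vectors of the plane `ℝ² ≅ ℂ`:
`cross v w > 0` means that `(v, w)` is a positively oriented pair (for the
standard orientation of the plane). Two vectors are linearly independent
iff their cross product is nonzero. -/
def cross (v w : ℂ) : ℝ := v.re * w.im - v.im * w.re

/-- A closed immersed curve in the plane `ℝ² ≅ ℂ`: a smooth `1`-periodic map
`ℝ → ℂ` (i.e. a smooth map on the circle `ℝ/ℤ`) with nowhere vanishing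
derivative. -/
structure ImmersedLoop where
  toFun : ℝ → ℂ
  smooth : ContDiff ℝ (⊤ : ℕ∞) toFun
  periodic : Function.Periodic toFun 1
  deriv_ne_zero : ∀ t : ℝ, deriv toFun t ≠ 0

namespace ImmersedLoop

/-- A self-intersection of the immersed loop: a point of the plane having at
least two preimages on the circle `ℝ/ℤ` (represented by `[0,1)`). -/
def SelfIntersection (γ : ImmersedLoop) (q : ℂ) : Prop :=
  ∃ s t : ℝ, s ∈ Set.Ico (0 : ℝ) 1 ∧ t ∈ Set.Ico (0 : ℝ) 1 ∧ s ≠ t ∧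
    γ.toFun s = q ∧ γ.toFun t = q

/-- A transverse double point: a point of the plane with exactly two preimages
on the circle, at which the two tangent vectors are linearly independent
(the two arcs cross transversely). -/
def IsTransverseDoublePoint (γ : ImmersedLoop) (q : ℂ) : Prop :=
  ∃ s t : ℝ, s ∈ Set.Ico (0 : ℝ) 1 ∧ t ∈ Set.Ico (0 : ℝ) 1 ∧ s ≠ t ∧
    γ.toFun s = q ∧ γ.toFun t = q ∧
    (∀ u ∈ Set.Ico (0 : ℝ) 1, γ.toFun u = q → u = s ∨ u = t) ∧
    cross (deriv γ.toFun s) (deriv γ.toFun t) ≠ 0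

/-- The loop intersects itself transversely: every self-intersection is a
transverse double point. -/
def Generic (γ : ImmersedLoop) : Prop :=
  ∀ q : ℂ, γ.SelfIntersection q → γ.IsTransverseDoublePoint q

/-- `γ.IndexIs n` means that the index (turning number) of the immersed loop
`γ` is `n`: the winding number around the origin of the nowhere-vanishing
derivative `γ' : ℝ/ℤ → ℂ \ {0}`, expressed via a continuous lift `θ` of the
angular part of `γ'`. -/
def IndexIs (γ : ImmersedLoop) (n : ℤ) : Prop :=
  ∃ θ : ℝ → ℝ, Continuous θ ∧
    (∀ t : ℝ, deriv γ.toFun t =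
      (‖deriv γ.toFun t‖ : ℂ) * Complex.exp ((θ t : ℂ) * Complex.I)) ∧
    θ 1 - θ 0 = 2 * Real.pi * (n : ℝ)

end ImmersedLoop

def AVar (f : ℝ → ℂ) (v : ℝ) : Prop :=
  ∃ φ : ℝ → ℝ, ContinuousOn φ (Icc 0 1) ∧
    (∀ t ∈ Icc (0 : ℝ) 1, ∃ r : ℝ, 0 < r ∧ f t = (r : ℂ) * Complex.exp ((φ t : ℂ) * Complex.I)) ∧
    φ 1 - φ 0 = v

lemma AVar.congr {f g : ℝ → ℂ} {v : ℝ} (h : AVar f v) (hfg : ∀ t ∈ Icc (0 : ℝ) 1, g t = f t) :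
    AVar g v := by
  obtain ⟨φ, h1, h2, h3⟩ := h
  refine ⟨φ, h1, fun t ht => ?_, h3⟩
  rw [hfg t ht]; exact h2 t ht

lemma AVar.mul {f g : ℝ → ℂ} {v w : ℝ} (h : AVar f v) (h' : AVar g w) :
    AVar (fun t => f t * g t) (v + w) := by
  obtain ⟨φ, h1, h2, h3⟩ := h
  obtain ⟨ψ, k1, k2, k3⟩ := h'
  refine ⟨fun t => φ t + ψ t, h1.add k1, fun t ht => ?_, by simp only []; linarith⟩
  obtain ⟨r, hr, e⟩ := h2 t ht
  obtain ⟨q, hq, e'⟩ := k2 t ht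
  refine ⟨r * q, by positivity, ?_⟩
  simp only [e, e']
  push_cast
  rw [add_mul, Complex.exp_add]; ring

lemma AVar.const {a : ℂ} (ha : a ≠ 0) : AVar (fun _ => a) 0 := by
  refine ⟨fun _ => a.arg, continuousOn_const, fun t _ => ⟨‖a‖, norm_pos_iff.2 ha, ?_⟩, by simp⟩
  exact (Complex.norm_mul_exp_arg_mul_I a).symm

lemma AVar.prod {ι : Type*} (Z : Finset ι) {f : ι → ℝ → ℂ} {v : ι → ℝ}
    (h : ∀ i ∈ Z, AVar (f i) (v i)) : AVar (fun t => ∏ i ∈ Z, f i t) (∑ i ∈ Z, v i) := by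
  classical
  induction Z using Finset.induction_on with
  | empty => simpa using AVar.const (one_ne_zero)
  | insert a s ha ih =>
    simp only [Finset.prod_insert ha, Finset.sum_insert ha]
    exact (h a (by simp)).mul (ih fun i hi => h i (by simp [hi]))

lemma exp_same {r q x y : ℝ} (hr : 0 < r) (hq : 0 < q)
    (h : (r : ℂ) * Complex.exp ((x : ℂ) * Complex.I) = (q : ℂ) * Complex.exp ((y : ℂ) * Complex.I)) :
    ∃ n : ℤ, x - y = 2 * Real.pi * n := by
  have hn : r = q := by
    have := congrArg norm h
    simpa [Complex.norm_exp_ofReal_mul_I, abs_of_pos hr, abs_of_pos hq] using this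
  subst hn
  have h2 := mul_left_cancel₀ (by exact_mod_cast hr.ne') h
  obtain ⟨n, hn⟩ := Complex.exp_eq_exp_iff_exists_int.1 h2
  refine ⟨n, ?_⟩
  have h3 := congrArg Complex.im hn
  simp at h3
  rw [h3]; ring

lemma const_of_int {f : ℝ → ℝ} {s : Set ℝ} (hs : IsPreconnected s) (hf : ContinuousOn f s)
    (h : ∀ t ∈ s, ∃ n : ℤ, f t = 2 * Real.pi * n) {a b : ℝ} (ha : a ∈ s) (hb : b ∈ s) :
    f a = f b := by
  have hpi := Real.pi_pos
  have hg : ContinuousOn (fun t => f t / (2 * Real.pi)) s := hf.div_const _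
  have := hs.constant_of_mapsTo (S := s) (T := range (Int.cast : ℤ → ℝ))
    (f := fun t => f t / (2 * Real.pi)) ?_ hg ?_ ha hb
  · field_simp at this
    exact this
  · exact (Int.isClosedEmbedding_coe_real.isEmbedding.toHomeomorph.symm.isEmbedding.discreteTopology).isDiscrete
  · intro t ht
    obtain ⟨n, hn⟩ := h t ht
    refine ⟨n, ?_⟩
    simp only [hn]; field_simp

lemma AVar.unique {f : ℝ → ℂ} {v w : ℝ} (h : AVar f v) (h' : AVar f w) : v = w := by
  obtain ⟨φ, h1, h2, h3⟩ := h
  obtain ⟨ψ, k1, k2, k3⟩ := h'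
  have := const_of_int (f := fun t => φ t - ψ t) isPreconnected_Icc (h1.sub k1) ?_
    (left_mem_Icc.2 (zero_le_one' ℝ)) (right_mem_Icc.2 (zero_le_one' ℝ))
  · linarith
  · intro t ht
    obtain ⟨r, hr, e⟩ := h2 t ht
    obtain ⟨q, hq, e'⟩ := k2 t ht
    exact exp_same hr hq (e.symm.trans e')

lemma AVar.ends {f : ℝ → ℂ} {v : ℝ} (h : AVar f v) :
    ∃ r : ℝ, 0 < r ∧ f 1 = f 0 * (r * Complex.exp ((v : ℂ) * Complex.I)) := by
  obtain ⟨φ, h1, h2, h3⟩ := h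
  obtain ⟨r, hr, e⟩ := h2 0 (by simp)
  obtain ⟨q, hq, e'⟩ := h2 1 (by simp)
  refine ⟨q / r, by positivity, ?_⟩
  have : φ 1 = φ 0 + v := by linarith
  rw [e, e', this]
  push_cast
  rw [add_mul, Complex.exp_add]
  have : (r : ℂ) ≠ 0 := by exact_mod_cast hr.ne'
  field_simp

lemma AVar.const_mul {f : ℝ → ℂ} {v : ℝ} (h : AVar f v) {a : ℂ} (ha : a ≠ 0) :
    AVar (fun t => a * f t) v := by
  simpa using (AVar.const ha).mul h

lemma AVar.seg {a b : ℂ} (h : ∀ t ∈ Icc (0 : ℝ) 1, a + t * b ≠ 0) :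
    ∃ v, |v| < Real.pi ∧ AVar (fun t => a + t * b) v := by
  have ha : a ≠ 0 := by simpa using h 0 (by simp)
  have hs : ∀ t ∈ Icc (0 : ℝ) 1, 1 + t * (b / a) ∈ Complex.slitPlane := by
    intro t ht
    by_contra hc
    rw [Complex.mem_slitPlane_iff] at hc
    push Not at hc
    obtain ⟨hre, him⟩ := hc
    simp only [Complex.add_re, Complex.one_re, Complex.mul_re, Complex.ofReal_re,
      Complex.ofReal_im, zero_mul, sub_zero, Complex.add_im, Complex.one_im, Complex.mul_im,
      add_zero, zero_add] at hre him
    have ht0 : 0 < t := by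
      rcases ht.1.lt_or_eq with h | h
      · exact h
      · subst h; norm_num at hre
    have hb : (b / a).im = 0 := by
      rcases mul_eq_zero.1 him with h | h
      · exact absurd h ht0.ne'
      · exact h
    set x := (b / a).re with hx
    have hba : b / a = (x : ℂ) := by
      apply Complex.ext <;> simp [hx, hb]
    have hx0 : x < 0 := by
      by_contra hx0
      have : 0 ≤ t * x := mul_nonneg ht0.le (not_lt.1 hx0)
      linarith
    have hx1 : 1 ≤ -x := by nlinarith [ht.2]
    apply h (1 / (-x)) ⟨by positivity, by rw [div_le_one (by linarith)]; exact hx1⟩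
    have hb' : b = x * a := by rw [← hba]; field_simp
    rw [hb']
    push_cast
    have : (x : ℂ) ≠ 0 := by exact_mod_cast hx0.ne
    field_simp
    ring
  refine ⟨(1 + b / a).arg, ?_, ?_⟩
  · have := hs 1 (by simp)
    rw [Complex.ofReal_one, one_mul] at this
    rw [abs_lt]
    refine ⟨Complex.neg_pi_lt_arg _, lt_of_le_of_ne (Complex.arg_le_pi _) ?_⟩
    exact (Complex.mem_slitPlane_iff_arg.1 this).1
  · have : AVar (fun t : ℝ => 1 + t * (b / a)) (1 + b / a).arg := by
      refine ⟨fun t => (1 + t * (b / a)).arg, ?_, ?_, by simp⟩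
      · exact Complex.continuousOn_arg.comp (by fun_prop) hs
      · intro t ht
        exact ⟨_, norm_pos_iff.2 (Complex.slitPlane_ne_zero (hs t ht)),
          (Complex.norm_mul_exp_arg_mul_I _).symm⟩
    refine (this.const_mul ha).congr fun t _ => ?_
    field_simp

lemma AVar.upper {f : ℝ → ℂ} (hf : ContinuousOn f (Icc 0 1))
    (h : ∀ t ∈ Icc (0 : ℝ) 1, f t ≠ 0 ∧ 0 ≤ (f t).im) :
    ∃ v, |v| ≤ Real.pi ∧ AVar f v := by
  refine ⟨(f 1).arg - (f 0).arg, ?_, fun t => (f t).arg, ?_, ?_, rfl⟩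
  · have h0 := (Complex.arg_nonneg_iff.2 (h 0 (by simp)).2)
    have h1 := (Complex.arg_nonneg_iff.2 (h 1 (by simp)).2)
    have h2 := Complex.arg_le_pi (f 0)
    have h3 := Complex.arg_le_pi (f 1)
    rw [abs_le]; constructor <;> linarith
  · have key : ContinuousOn Complex.arg {z : ℂ | z ≠ 0 ∧ 0 ≤ z.im} := by
      intro z hz
      by_cases hs : z ∈ Complex.slitPlane
      · exact (Complex.continuousAt_arg hs).continuousWithinAt
      · rw [Complex.mem_slitPlane_iff] at hs
        push Not at hs
        have hne : z.re ≠ 0 := fun h0 => hz.1 (Complex.ext h0 hs.2)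
        exact (Complex.continuousWithinAt_arg_of_re_neg_of_im_zero
          (lt_of_le_of_ne hs.1 hne) hs.2).mono fun w hw => hw.2
    exact key.comp hf h
  · intro t ht
    exact ⟨_, norm_pos_iff.2 (h t ht).1, (Complex.norm_mul_exp_arg_mul_I _).symm⟩

lemma AVar.exp {g : ℝ → ℂ} (hg : ContinuousOn g (Icc 0 1)) :
    AVar (fun t => Complex.exp (g t)) ((g 1).im - (g 0).im) := by
  refine ⟨fun t => (g t).im, Complex.continuous_im.comp_continuousOn hg, fun t _ =>
    ⟨Real.exp (g t).re, Real.exp_pos _, ?_⟩, rfl⟩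
  rw [Complex.ofReal_exp, ← Complex.exp_add, Complex.re_add_im]

/-- Triangle relation for nonvanishing maps on the triangle. -/
lemma tri_zero {H : ℝ × ℝ → ℂ} (hH : Continuous H)
    (hne : ∀ s t, 0 ≤ s → s ≤ t → t ≤ 1 → H (s, t) ≠ 0) :
    ∃ a b c : ℝ, AVar (fun y => H (0, y)) a ∧ AVar (fun y => H (y, y)) b ∧
      AVar (fun x => H (x, 1)) c ∧ a + c - b = 0 := by
  let π : ℝ → ℝ := fun x => max 0 (min 1 x)
  have hπ : Continuous π := by fun_prop
  have hπ0 : ∀ x, 0 ≤ π x := fun x => le_max_left _ _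
  have hπ1 : ∀ x, π x ≤ 1 := fun x => max_le zero_le_one (min_le_left _ _)
  have hπe : ∀ x ∈ Icc (0 : ℝ) 1, π x = x := fun x hx => by
    simp [π, hx.1, hx.2]
  let G : C(ℝ × ℝ, ℂ) := ⟨fun p => H (π p.1 * π p.2, π p.2), by fun_prop⟩
  have hG : ∀ p, G p ∈ ({0}ᶜ : Set ℂ) := fun p =>
    hne _ _ (mul_nonneg (hπ0 _) (hπ0 _)) (mul_le_of_le_one_left (hπ0 _) (hπ1 _)) (hπ1 _)
  obtain ⟨g, ⟨-, hg⟩, -⟩ := Complex.isCoveringMapOn_exp.existsUnique_continuousMap_lifts G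
    (a₀ := (0, 0)) (e₀ := Complex.log (G (0, 0))) (Complex.exp_log (hG _)) hG
  have hg' : ∀ p, Complex.exp (g p) = G p := fun p => congrFun hg p
  have h0 : (0 : ℝ) ∈ Icc (0 : ℝ) 1 := by simp
  have h1 : (1 : ℝ) ∈ Icc (0 : ℝ) 1 := by simp
  refine ⟨_, _, _, (AVar.exp (g := fun y => g (0, y)) (by fun_prop)).congr ?_,
    (AVar.exp (g := fun y => g (1, y)) (by fun_prop)).congr ?_,
    (AVar.exp (g := fun x => g (x, 1)) (by fun_prop)).congr ?_, ?_⟩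
  · intro t ht
    simp [hg', G, hπe _ ht, hπe _ h0]
  · intro t ht
    simp [hg', G, hπe _ ht, hπe _ h1]
  · intro t ht
    simp [hg', G, hπe _ ht, hπe _ h1]
  · have := (AVar.exp (g := fun x => g (x, 0)) (by fun_prop)).congr (g := fun _ => H (0, 0)) ?_
    · have := this.unique (AVar.const (hne 0 0 le_rfl le_rfl zero_le_one))

      linarith
    · intro t ht
      simp [hg', G, hπe _ h0]

/-- Triangle relation for injective real-linear maps. -/
lemma tri_lin {L : ℝ × ℝ →L[ℝ] ℂ} (hL : Function.Injective L) {p : ℝ × ℝ}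
    (h0 : 0 < p.1) (h1 : p.1 < p.2) (h2 : p.2 < 1) :
    ∃ a b c : ℝ, AVar (fun y => L ((0, y) - p)) a ∧ AVar (fun y => L ((y, y) - p)) b ∧
      AVar (fun x => L ((x, 1) - p)) c ∧ |a + c - b| ≤ 2 * Real.pi := by
  have hz : ∀ q : ℝ × ℝ, q ≠ p → L (q - p) ≠ 0 := fun q hq h =>
    hq (sub_eq_zero.1 (hL (h.trans (map_zero L).symm)))
  have aff : ∀ (u w : ℝ × ℝ) (t : ℝ), L (u + t • w - p) = L (u - p) + t * L w := by
    intro u w t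
    rw [show u + t • w - p = (u - p) + t • w by abel, map_add, map_smul]; simp
  have key : ∀ (u w : ℝ × ℝ), (∀ t ∈ Icc (0 : ℝ) 1, u + t • w ≠ p) →
      ∃ v, |v| < Real.pi ∧ AVar (fun t => L (u + t • w - p)) v := by
    intro u w h
    obtain ⟨v, hv, h'⟩ := AVar.seg (a := L (u - p)) (b := L w) (fun t ht => by
      rw [← aff]; exact hz _ (h t ht))
    exact ⟨v, hv, h'.congr fun t _ => aff u w t⟩
  obtain ⟨a, ha, hA⟩ := key (0, 0) (0, 1) (by
    intro t ht h; have := congrArg Prod.fst h; simp at this; linarith)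
  obtain ⟨b, hb, hB⟩ := key (0, 0) (1, 1) (by
    intro t ht h
    have := congrArg Prod.fst h
    have := congrArg Prod.snd h
    simp at *; linarith)
  obtain ⟨c, hc, hC⟩ := key (0, 1) (1, 0) (by
    intro t ht h; have := congrArg Prod.snd h; simp at this; linarith)
  replace hA := hA.congr (g := fun y => L ((0, y) - p)) (by intro t _; simp)
  replace hB := hB.congr (g := fun y => L ((y, y) - p)) (by intro t _; simp)
  replace hC := hC.congr (g := fun y => L ((y, 1) - p)) (by intro t _; simp)
  refine ⟨a, b, c, hA, hB, hC, ?_⟩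
  obtain ⟨r, hr, eA⟩ := hA.ends
  obtain ⟨q, hq, eB⟩ := hB.ends
  obtain ⟨k, hk, eC⟩ := hC.ends
  have h00 : L ((0, 0) - p) ≠ 0 := hz _ (by rintro rfl; simp at h0)
  have e : ((r * k : ℝ) : ℂ) * Complex.exp (((a + c : ℝ) : ℂ) * Complex.I) =
      (q : ℂ) * Complex.exp ((b : ℂ) * Complex.I) := by
    apply mul_left_cancel₀ h00
    rw [← eB, eC, eA]
    push_cast
    rw [add_mul, Complex.exp_add]; ring
  obtain ⟨n, hn⟩ := exp_same (by positivity) hq e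
  rw [hn]
  have hpi := Real.pi_pos
  have hlt : |2 * Real.pi * (n : ℝ)| < 3 * Real.pi := by
    rw [← hn]
    rw [abs_lt] at *
    constructor <;> linarith
  rw [abs_mul, abs_of_pos (by positivity)] at hlt ⊢
  have : |(n : ℝ)| < 2 := by nlinarith
  have : |n| < 2 := by exact_mod_cast this
  have : |n| ≤ 1 := by omega
  have : |(n : ℝ)| ≤ 1 := by exact_mod_cast this
  nlinarith

/-- Argument principle (bound). -/
lemma tri_bound {F : ℝ × ℝ → ℂ} (hF : Continuous F) (Z : Finset (ℝ × ℝ))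
    (hZ : ∀ s t, 0 ≤ s → s ≤ t → t ≤ 1 → F (s, t) = 0 → (s, t) ∈ Z)
    (hZi : ∀ p ∈ Z, 0 < p.1 ∧ p.1 < p.2 ∧ p.2 < 1)
    (hZL : ∀ p ∈ Z, ∃ L : ℝ × ℝ →L[ℝ] ℂ, Function.Injective L ∧ ∃ a : ℂ, a ≠ 0 ∧
      Filter.Tendsto (fun q => F q / L (q - p)) (𝓝[≠] p) (𝓝 a)) :
    ∃ a b c : ℝ, AVar (fun y => F (0, y)) a ∧ AVar (fun y => F (y, y)) b ∧
      AVar (fun x => F (x, 1)) c ∧ |a + c - b| ≤ 2 * Real.pi * Z.card := by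
  classical
  have hZL' : ∀ p : ℝ × ℝ, ∃ L : ℝ × ℝ →L[ℝ] ℂ, ∃ a : ℂ, p ∈ Z → (Function.Injective L ∧ a ≠ 0 ∧
      Filter.Tendsto (fun q => F q / L (q - p)) (𝓝[≠] p) (𝓝 a)) := by
    intro p
    by_cases hp : p ∈ Z
    · obtain ⟨L, hL, a, ha, h⟩ := hZL p hp
      exact ⟨L, a, fun _ => ⟨hL, ha, h⟩⟩
    · exact ⟨0, 0, fun h => absurd h hp⟩
  choose L α hLα using hZL'
  have hz : ∀ p ∈ Z, ∀ q : ℝ × ℝ, q ≠ p → L p (q - p) ≠ 0 := fun p hp q hq h =>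
    hq (sub_eq_zero.1 ((hLα p hp).1 (h.trans (map_zero (L p)).symm)))
  let H : ℝ × ℝ → ℂ := fun q => if q ∈ Z then α q / ∏ p ∈ Z.erase q, L p (q - p)
    else F q / ∏ p ∈ Z, L p (q - p)
  have hHc : Continuous H := by
    rw [continuous_iff_continuousAt]
    intro q
    by_cases hq : q ∈ Z
    · rw [continuousAt_iff_punctured_nhds]
      have hev : ∀ᶠ x in 𝓝[≠] q, x ∉ (Z.erase q : Finset _) := by
        refine Filter.Eventually.filter_mono nhdsWithin_le_nhds ?_
        exact (Z.erase q).finite_toSet.isClosed.isOpen_compl.mem_nhds (by simp)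
      have h1 : Filter.Tendsto (fun x => (F x / L q (x - q)) / ∏ p ∈ Z.erase q, L p (x - p))
          (𝓝[≠] q) (𝓝 (α q / ∏ p ∈ Z.erase q, L p (q - p))) := by
        refine (hLα q hq).2.2.div ?_ ?_
        · refine Filter.Tendsto.mono_left ?_ nhdsWithin_le_nhds
          have : Continuous fun x => ∏ p ∈ Z.erase q, L p (x - p) := by fun_prop
          exact this.tendsto q
        · rw [Finset.prod_ne_zero_iff]
          intro p hp
          exact hz p (Finset.mem_of_mem_erase hp) q (Finset.ne_of_mem_erase hp).symm
      have hval : H q = α q / ∏ p ∈ Z.erase q, L p (q - p) := if_pos hq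
      rw [hval]
      refine h1.congr' ?_
      filter_upwards [hev, self_mem_nhdsWithin] with x hx hxq
      have hxZ : x ∉ Z := fun h => hx (Finset.mem_erase.2 ⟨hxq, h⟩)
      have : H x = F x / ∏ p ∈ Z, L p (x - p) := if_neg hxZ
      rw [this, ← Finset.mul_prod_erase Z _ hq, div_div]
    · have h1 : ContinuousAt (fun x => F x / ∏ p ∈ Z, L p (x - p)) q := by
        refine hF.continuousAt.div (by fun_prop) ?_
        rw [Finset.prod_ne_zero_iff]
        intro p hp
        exact hz p hp q (fun h => hq (h ▸ hp))
      refine h1.congr ?_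
      filter_upwards [Z.finite_toSet.isClosed.isOpen_compl.mem_nhds (show q ∈ (Z : Set (ℝ × ℝ))ᶜ from hq)] with x hx
      exact (if_neg hx).symm
  have hHne : ∀ s t, 0 ≤ s → s ≤ t → t ≤ 1 → H (s, t) ≠ 0 := by
    intro s t h0 h1 h2
    by_cases hq : (s, t) ∈ Z
    · have hval : H (s, t) = α (s, t) / ∏ p ∈ Z.erase (s, t), L p ((s, t) - p) := if_pos hq
      rw [hval]
      refine div_ne_zero (hLα _ hq).2.1 ?_
      rw [Finset.prod_ne_zero_iff]
      intro p hp
      exact hz p (Finset.mem_of_mem_erase hp) _ (Finset.ne_of_mem_erase hp).symm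
    · have hval : H (s, t) = F (s, t) / ∏ p ∈ Z, L p ((s, t) - p) := if_neg hq
      rw [hval]
      refine div_ne_zero (fun h => hq (hZ s t h0 h1 h2 h)) ?_
      rw [Finset.prod_ne_zero_iff]
      intro p hp
      exact hz p hp _ (fun h => hq (h ▸ hp))
  have hFH : ∀ q, q ∉ Z → F q = H q * ∏ p ∈ Z, L p (q - p) := by
    intro q hq
    have hval : H q = F q / ∏ p ∈ Z, L p (q - p) := if_neg hq
    rw [hval, div_mul_cancel₀]
    rw [Finset.prod_ne_zero_iff]
    intro p hp
    exact hz p hp _ (fun h => hq (h ▸ hp))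
  obtain ⟨a, b, c, hA, hB, hC, habc⟩ := tri_zero hHc hHne
  have hlin : ∀ p : ℝ × ℝ, ∃ a b c : ℝ, p ∈ Z → (AVar (fun y => L p ((0, y) - p)) a ∧
      AVar (fun y => L p ((y, y) - p)) b ∧
      AVar (fun x => L p ((x, 1) - p)) c ∧ |a + c - b| ≤ 2 * Real.pi) := by
    intro p
    by_cases hp : p ∈ Z
    · obtain ⟨h0, h1, h2⟩ := hZi p hp
      obtain ⟨a, b, c, h⟩ := tri_lin (hLα p hp).1 h0 h1 h2
      exact ⟨a, b, c, fun _ => h⟩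
    · exact ⟨0, 0, 0, fun h => absurd h hp⟩
  choose a' b' c' hl using hlin
  refine ⟨_, _, _, (hA.mul (AVar.prod Z fun p hp => (hl p hp).1)).congr ?_,
    (hB.mul (AVar.prod Z fun p hp => (hl p hp).2.1)).congr ?_,
    (hC.mul (AVar.prod Z fun p hp => (hl p hp).2.2.1)).congr ?_, ?_⟩
  · intro t _
    exact hFH _ fun h => by have := hZi _ h; simp at this
  · intro t _
    exact hFH _ fun h => by have := hZi _ h; simp at this
  · intro t _
    exact hFH _ fun h => by have := hZi _ h; simp at this
  · have : a + ∑ i ∈ Z, a' i + (c + ∑ i ∈ Z, c' i) - (b + ∑ i ∈ Z, b' i)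
        = ∑ i ∈ Z, (a' i + c' i - b' i) := by
      rw [Finset.sum_sub_distrib, Finset.sum_add_distrib]; linarith
    rw [this]
    refine (Finset.abs_sum_le_sum_abs _ _).trans ?_
    refine (Finset.sum_le_sum fun p hp => (hl p hp).2.2.2).trans ?_
    simp [mul_comm]

def KK (c : ℝ → ℂ) (p : ℝ × ℝ) : ℂ := ∫ u in (0 : ℝ)..1, deriv c (p.1 + u * (p.2 - p.1))


lemma KK_cont {c : ℝ → ℂ} (hc : ContDiff ℝ (⊤ : ℕ∞) c) : Continuous (KK c) := by
  have h : Continuous (deriv c) := hc.continuous_deriv (by simp)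
  unfold KK
  apply intervalIntegral.continuous_parametric_intervalIntegral_of_continuous'
  fun_prop

lemma KK_mul {c : ℝ → ℂ} (hc : ContDiff ℝ (⊤ : ℕ∞) c) (s t : ℝ) :
    ((t - s : ℝ) : ℂ) * KK c (s, t) = c t - c s := by
  have h : Continuous (deriv c) := hc.continuous_deriv (by simp)
  have hd : Differentiable ℝ c := hc.differentiable (by simp)
  have h2 : ∀ u ∈ uIcc (0 : ℝ) 1, HasDerivAt (fun u : ℝ => c (s + u * (t - s)))
      (((t - s : ℝ) : ℂ) * deriv c (s + u * (t - s))) u := by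
    intro u _
    have h3 : HasDerivAt (fun u : ℝ => s + u * (t - s)) (t - s) u := by
      simpa using ((hasDerivAt_id u).mul_const (t - s)).const_add s
    have := (hd (s + u * (t - s))).hasDerivAt.scomp u h3
    rw [Complex.real_smul] at this
    exact this
  have := intervalIntegral.integral_eq_sub_of_hasDerivAt h2
    (Continuous.intervalIntegrable (by fun_prop) _ _)
  rw [intervalIntegral.integral_const_mul] at this
  unfold KK
  simpa using this

lemma KK_diag (c : ℝ → ℂ) (s : ℝ) : KK c (s, s) = deriv c s := by
  simp [KK]

lemma KK_symm (c : ℝ → ℂ) (s t : ℝ) : KK c (s, t) = KK c (t, s) := by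
  unfold KK
  have := intervalIntegral.integral_comp_sub_left
    (a := 0) (b := 1) (fun u : ℝ => deriv c (t + u * (s - t))) 1
  simp only [sub_self, sub_zero] at this
  rw [← this]
  congr 1; ext u; congr 1; ring

lemma deriv_per {c : ℝ → ℂ} (hp : Function.Periodic c 1) : Function.Periodic (deriv c) 1 := by
  intro t
  rw [← deriv_comp_add_const]
  congr 1; ext x; exact hp x

lemma KK_per {c : ℝ → ℂ} (hp : Function.Periodic c 1) (s t : ℝ) :
    KK c (s + 1, t + 1) = KK c (s, t) := by
  unfold KK
  congr 1; ext u
  rw [← deriv_per hp (s + u * (t - s))]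
  congr 1; simp only []; ring

def FF (c : ℝ → ℂ) (p : ℝ × ℝ) : ℂ := KK c p - KK c (p.1, p.2 - 1)

lemma FF_cont {c : ℝ → ℂ} (hc : ContDiff ℝ (⊤ : ℕ∞) c) : Continuous (FF c) := by
  have := KK_cont hc
  unfold FF; fun_prop

lemma FF_mul {c : ℝ → ℂ} (hc : ContDiff ℝ (⊤ : ℕ∞) c) (hp : Function.Periodic c 1) (s t : ℝ) :
    (((t - s) * (1 - (t - s)) : ℝ) : ℂ) * FF c (s, t) = c t - c s := by
  have h1 := KK_mul hc s t
  have h2 := KK_mul hc s (t - 1)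
  rw [hp.sub_eq] at h2
  unfold FF
  push_cast at *
  linear_combination (1 - ((t : ℂ) - s)) * h1 + ((t : ℂ) - s) * h2

lemma FF_diag {c : ℝ → ℂ} (hc : ContDiff ℝ (⊤ : ℕ∞) c) (hp : Function.Periodic c 1) (s : ℝ) :
    FF c (s, s) = deriv c s := by
  have h2 := KK_mul hc s (s - 1)
  rw [hp.sub_eq] at h2
  simp at h2
  simp [FF, KK_diag, h2]

lemma FF_top {c : ℝ → ℂ} (hp : Function.Periodic c 1) (s : ℝ) :
    FF c (s, 1) = (-1) * FF c (0, s) := by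
  have h := KK_per hp (s - 1) 0
  simp only [sub_add_cancel, zero_add] at h
  simp only [FF, h, sub_self]
  rw [KK_symm c (s - 1) 0, KK_symm c s 0]; ring

lemma FF_corner {c : ℝ → ℂ} (hc : ContDiff ℝ (⊤ : ℕ∞) c) (hp : Function.Periodic c 1) :
    FF c (0, 1) = - deriv c 0 := by
  rw [FF_top hp, FF_diag hc hp]; ring

lemma cross_zero_re {v w : ℂ} (hv : v.im = 0) (hw : w.im = 0) : cross v w = 0 := by
  simp [cross, hv, hw]

lemma FF_lim {c : ℝ → ℂ} (hc : ContDiff ℝ (⊤ : ℕ∞) c) (hp : Function.Periodic c 1) {s t : ℝ}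
    (h1 : s < t) (h2 : t < s + 1) (hst : c s = c t)
    (hcr : cross (deriv c s) (deriv c t) ≠ 0) :
    ∃ L : ℝ × ℝ →L[ℝ] ℂ, Function.Injective L ∧ ∃ a : ℂ, a ≠ 0 ∧
      Filter.Tendsto (fun q => FF c q / L (q - (s, t))) (𝓝[≠] (s, t)) (𝓝 a) := by
  have hd : Differentiable ℝ c := hc.differentiable (by simp)
  let L : ℝ × ℝ →L[ℝ] ℂ := (ContinuousLinearMap.snd ℝ ℝ ℝ).smulRight (deriv c t) -
    (ContinuousLinearMap.fst ℝ ℝ ℝ).smulRight (deriv c s)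
  have hLa : ∀ w, L w = w.2 * deriv c t - w.1 * deriv c s := by
    intro w; simp [L]
  have hder : HasFDerivAt (fun q : ℝ × ℝ => c q.2 - c q.1) L (s, t) := by
    have a1 := (hd t).hasDerivAt.hasFDerivAt.comp (s, t) (hasFDerivAt_snd (𝕜 := ℝ) (p := (s, t)))
    have a2 := (hd s).hasDerivAt.hasFDerivAt.comp (s, t) (hasFDerivAt_fst (𝕜 := ℝ) (p := (s, t)))
    refine (a1.sub a2).congr_fderiv ?_
    ext <;> simp [L]
  have hinj : Function.Injective L := by
    rw [injective_iff_map_eq_zero]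
    intro w hw
    rw [hLa] at hw
    have hr := congrArg Complex.re hw
    have hi := congrArg Complex.im hw
    simp at hr hi
    unfold cross at hcr
    have e1 : w.1 * ((deriv c s).re * (deriv c t).im - (deriv c s).im * (deriv c t).re) = 0 := by
      linear_combination (-(deriv c t).im) * hr + (deriv c t).re * hi
    have e2 : w.2 * ((deriv c s).re * (deriv c t).im - (deriv c s).im * (deriv c t).re) = 0 := by
      linear_combination (-(deriv c s).im) * hr + (deriv c s).re * hi
    ext
    · simpa [hcr] using e1
    · simpa [hcr] using e2
  have hz : ∀ q : ℝ × ℝ, q ≠ (s, t) → L (q - (s, t)) ≠ 0 := fun q hq h =>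
    hq (sub_eq_zero.1 (hinj (h.trans (map_zero L).symm)))
  refine ⟨L, hinj, (((t - s) * (1 - (t - s)) : ℝ) : ℂ)⁻¹, ?_, ?_⟩
  · apply inv_ne_zero
    have : (t - s) * (1 - (t - s)) ≠ 0 := (mul_pos (by linarith) (by linarith)).ne'
    exact_mod_cast this
  · have hne : (((t - s) * (1 - (t - s)) : ℝ) : ℂ) ≠ 0 := by
      have : (t - s) * (1 - (t - s)) ≠ 0 := (mul_pos (by linarith) (by linarith)).ne'
      exact_mod_cast this
    obtain ⟨K, hK, hanti⟩ := LinearMap.exists_antilipschitzWith (L : ℝ × ℝ →ₗ[ℝ] ℂ)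
      (LinearMap.ker_eq_bot.2 hinj)
    have hO : (fun q : ℝ × ℝ => q - (s, t)) =O[𝓝 (s, t)] fun q => L (q - (s, t)) := by
      refine Asymptotics.IsBigO.of_bound K (Filter.Eventually.of_forall fun q => ?_)
      have := hanti.le_mul_dist (q - (s, t)) 0
      simpa using this
    have ho := (hder.isLittleO.trans_isBigO hO).mono (nhdsWithin_le_nhds (s := {(s, t)}ᶜ))
    have hlim0 := ho.tendsto_div_nhds_zero
    have hlim1 : Filter.Tendsto (fun q : ℝ × ℝ => (c q.2 - c q.1) / L (q - (s, t)))
        (𝓝[≠] (s, t)) (𝓝 1) := by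
      have := hlim0.add_const 1
      rw [zero_add] at this
      refine this.congr' ?_
      filter_upwards [self_mem_nhdsWithin] with q hq
      have := hz q hq
      simp only [hst, sub_self, sub_zero]
      field_simp
      ring
    have hcont : Filter.Tendsto
        (fun q : ℝ × ℝ => (((q.2 - q.1) * (1 - (q.2 - q.1)) : ℝ) : ℂ)) (𝓝[≠] (s, t))
        (𝓝 (((t - s) * (1 - (t - s)) : ℝ) : ℂ)) := by
      refine Filter.Tendsto.mono_left ?_ nhdsWithin_le_nhds
      have : Continuous (fun q : ℝ × ℝ => (((q.2 - q.1) * (1 - (q.2 - q.1)) : ℝ) : ℂ)) := by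
        fun_prop
      exact this.tendsto (s, t)
    have := (hcont.inv₀ hne).mul hlim1
    rw [mul_one] at this
    refine this.congr' ?_
    filter_upwards [hcont.eventually_ne hne] with q hq
    rw [← FF_mul hc hp q.1 q.2]
    field_simp

lemma main_c {c : ℝ → ℂ} (hc : ContDiff ℝ (⊤ : ℕ∞) c) (hp : Function.Periodic c 1)
    (hd : ∀ t, deriv c t ≠ 0) (hmin : ∀ t, (c 0).im ≤ (c t).im)
    (D : ∀ s t, 0 ≤ s → s < t → t < 1 → c s = c t → cross (deriv c s) (deriv c t) ≠ 0)
    (Z : Finset (ℝ × ℝ)) (hZ : ∀ s t, 0 ≤ s → s < t → t < 1 → c s = c t → (s, t) ∈ Z)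
    (hZ' : ∀ p ∈ Z, 0 ≤ p.1 ∧ p.1 < p.2 ∧ p.2 < 1 ∧ c p.1 = c p.2)
    (θ : ℝ → ℝ) (hθ : Continuous θ)
    (hθ' : ∀ t, deriv c t = (‖deriv c t‖ : ℂ) * Complex.exp ((θ t : ℂ) * Complex.I))
    (n : ℤ) (hn : θ 1 - θ 0 = 2 * Real.pi * (n : ℝ)) : |n| ≤ 1 + Z.card := by
  have him : ∀ t, (c t).im = (c 0).im → (deriv c t).im = 0 := by
    intro t ht
    have h1 : HasDerivAt (fun x => (c x).im) (deriv c t).im t := by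
      have := (hc.differentiable (by simp) t).hasDerivAt
      exact Complex.imCLM.hasFDerivAt.comp_hasDerivAt t this
    have h2 : IsLocalMin (fun x => (c x).im) t :=
      Filter.Eventually.of_forall fun x => by simp only [ht]; exact hmin x
    exact h2.hasDerivAt_eq_zero h1
  have hbase : ∀ t, 0 < t → t < 1 → c t ≠ c 0 := by
    intro t h0 h1 h
    exact D 0 t le_rfl h0 h1 h.symm (cross_zero_re (him 0 rfl) (him t (by rw [h])))
  have hF0 : ∀ t ∈ Icc (0 : ℝ) 1, FF c (0, t) ≠ 0 ∧ 0 ≤ (FF c (0, t)).im := by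
    intro t ht
    rcases ht.1.eq_or_lt with h | h
    · rw [← h, FF_diag hc hp]; exact ⟨hd 0, (him 0 rfl).ge⟩
    rcases ht.2.eq_or_lt with h' | h'
    · rw [h', FF_corner hc hp]; exact ⟨neg_ne_zero.2 (hd 0), by simp [him 0 rfl]⟩
    have e := FF_mul hc hp 0 t
    rw [sub_zero] at e
    have hpos : 0 < t * (1 - t) := mul_pos h (by linarith)
    constructor
    · intro h0
      rw [h0, mul_zero] at e
      exact hbase t h h' (sub_eq_zero.1 e.symm)
    · have := congrArg Complex.im e
      rw [Complex.im_ofReal_mul, Complex.sub_im] at this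
      have h3 := hmin t
      by_contra hneg
      push Not at hneg
      nlinarith
  have T := tri_bound (FF_cont hc) Z ?_ ?_ ?_
  · obtain ⟨a, b, k, hA, hB, hC, hbound⟩ := T
    obtain ⟨v, hv, hV⟩ := AVar.upper (f := fun t => FF c (0, t))
      ((FF_cont hc).comp (by fun_prop)).continuousOn hF0
    have e1 : a = v := hA.unique hV
    have e2 : k = v := hC.unique ((hV.const_mul (a := -1) (by norm_num)).congr
      fun t _ => FF_top hp t)
    have e3 : b = 2 * Real.pi * n := hB.unique ⟨θ, hθ.continuousOn, fun t _ =>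
      ⟨_, norm_pos_iff.2 (hd t), (FF_diag hc hp t).trans (hθ' t)⟩, hn⟩
    subst e1 e2 e3
    have hpi := Real.pi_pos
    have : 2 * Real.pi * |(n : ℝ)| ≤ 2 * Real.pi * (1 + Z.card) := by
      rw [← abs_of_pos (show 0 < 2 * Real.pi by positivity), ← abs_mul,
        abs_of_pos (show 0 < 2 * Real.pi by positivity)]
      rw [abs_le] at *
      constructor <;> linarith
    have := le_of_mul_le_mul_left this (by positivity)
    exact_mod_cast this
  · intro s t h0 h1 h2 hF
    have e := FF_mul hc hp s t
    rw [hF, mul_zero] at e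
    have hst : c s = c t := (sub_eq_zero.1 e.symm).symm
    have hlt : s < t := by
      refine lt_of_le_of_ne h1 ?_
      rintro rfl
      rw [FF_diag hc hp] at hF
      exact hd _ hF
    rcases h2.lt_or_eq with h | h
    · exact hZ s t h0 hlt h hst
    · subst h
      rw [FF_top hp] at hF
      exact absurd (by simpa using hF) (hF0 s ⟨h0, h1⟩).1
  · intro p hpZ
    obtain ⟨h0, h1, h2, h3⟩ := hZ' p hpZ
    refine ⟨lt_of_le_of_ne h0 ?_, h1, h2⟩
    intro h
    rw [← h] at h1 h3
    exact hbase p.2 h1 h2 h3.symm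
  · intro p hpZ
    obtain ⟨h0, h1, h2, h3⟩ := hZ' p hpZ
    exact FF_lim hc hp h1 (by linarith) h3 (D _ _ h0 h1 h2 h3)

lemma cross_swap {v w : ℂ} (h : cross v w ≠ 0) : cross w v ≠ 0 := by
  unfold cross at *
  intro h'; apply h; linarith

lemma fract_eq {a x y : ℝ} (hx : 0 ≤ x) (hx1 : x < 1) (hy : 0 ≤ y) (hy1 : y < 1)
    (h : Int.fract (a + x) = Int.fract (a + y)) : x = y := by
  obtain ⟨z, hz⟩ := Int.fract_eq_fract.1 h
  have h1 : (z : ℝ) < 1 := by linarith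
  have h2 : (-1 : ℝ) < z := by linarith
  have h1' : z < 1 := by exact_mod_cast h1
  have h2' : -1 < z := by exact_mod_cast h2
  have : z = 0 := by omega
  subst this
  simp at hz; linarith

/-- Let `C = γ` be an oriented closed immersed curve in the
plane with only transverse double-point self-intersections and with index
`1 - 2g` for some `g ≥ 1`.  Then the total number of self-intersections of `C`
is at least `2g - 2`. -/
theorem self_intersections_lower_bound_of_index (γ : ImmersedLoop)
    (hgen : γ.Generic) (g : ℕ) (hg : 1 ≤ g)
    (hind : γ.IndexIs (1 - 2 * (g : ℤ))) :
    ((2 * g - 2 : ℕ) : ℕ∞) ≤ {q : ℂ | γ.SelfIntersection q}.encard := by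
  by_cases hfin : {q : ℂ | γ.SelfIntersection q}.Finite
  swap
  · rw [Set.Infinite.encard_eq hfin]; exact le_top
  obtain ⟨θ, hθ, hθ', hn⟩ := hind
  have hper := γ.periodic
  have hdper := deriv_per hper
  have hfr : ∀ x, γ.toFun (Int.fract x) = γ.toFun x := fun x => by
    have := hper.sub_int_mul_eq (x := x) ⌊x⌋
    rwa [mul_one] at this
  have hdfr : ∀ x, deriv γ.toFun (Int.fract x) = deriv γ.toFun x := fun x => by
    have := hdper.sub_int_mul_eq (x := x) ⌊x⌋
    rwa [mul_one] at this
  obtain ⟨t₀, -, ht₀⟩ := isCompact_Icc.exists_isMinOn (nonempty_Icc.2 (zero_le_one' ℝ))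
    (f := fun t => (γ.toFun t).im)
    (Complex.continuous_im.comp γ.smooth.continuous).continuousOn
  have hmin : ∀ t, (γ.toFun t₀).im ≤ (γ.toFun t).im := fun t => by
    rw [← hfr t]
    exact ht₀ ⟨Int.fract_nonneg t, (Int.fract_lt_one t).le⟩
  let c : ℝ → ℂ := fun t => γ.toFun (t₀ + t)
  have hcd : ∀ t, deriv c t = deriv γ.toFun (t₀ + t) := fun t => deriv_comp_const_add _ _ _
  have hD : ∀ s t, 0 ≤ s → s < t → t < 1 → c s = c t →
      cross (deriv c s) (deriv c t) ≠ 0 ∧ γ.SelfIntersection (c s) ∧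
      ∀ u, 0 ≤ u → u < 1 → c u = c s → u = s ∨ u = t := by
    intro s t h0 h1 h2 hst
    have hne : Int.fract (t₀ + s) ≠ Int.fract (t₀ + t) := fun h =>
      h1.ne (fract_eq h0 (h1.trans h2) (h0.trans h1.le) h2 h)
    have hfm : ∀ x : ℝ, Int.fract x ∈ Ico (0 : ℝ) 1 := fun x =>
      ⟨Int.fract_nonneg x, Int.fract_lt_one x⟩
    have hSI : γ.SelfIntersection (c s) :=
      ⟨_, _, hfm (t₀ + s), hfm (t₀ + t), hne, hfr _, (hfr _).trans hst.symm⟩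
    obtain ⟨σ, τ, hσ, hτ, hστ, hσq, hτq, huniq, hcr⟩ := hgen _ hSI
    have hs := huniq _ (hfm (t₀ + s)) (hfr _)
    have ht := huniq _ (hfm (t₀ + t)) ((hfr _).trans hst.symm)
    have key : (Int.fract (t₀ + s) = σ ∧ Int.fract (t₀ + t) = τ) ∨
        (Int.fract (t₀ + s) = τ ∧ Int.fract (t₀ + t) = σ) := by
      rcases hs with hs | hs <;> rcases ht with ht | ht
      · exact absurd (hs.trans ht.symm) hne
      · exact Or.inl ⟨hs, ht⟩
      · exact Or.inr ⟨hs, ht⟩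
      · exact absurd (hs.trans ht.symm) hne
    refine ⟨?_, hSI, ?_⟩
    · rw [hcd, hcd, ← hdfr (t₀ + s), ← hdfr (t₀ + t)]
      rcases key with ⟨e1, e2⟩ | ⟨e1, e2⟩
      · rw [e1, e2]; exact hcr
      · rw [e1, e2]; exact cross_swap hcr
    · intro u hu0 hu1 hu
      have hu' := huniq _ (hfm (t₀ + u)) ((hfr _).trans hu)
      have : Int.fract (t₀ + u) = Int.fract (t₀ + s) ∨ Int.fract (t₀ + u) = Int.fract (t₀ + t) := by
        rcases key with ⟨e1, e2⟩ | ⟨e1, e2⟩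
        · rw [e1, e2]; exact hu'
        · rw [e1, e2]; exact hu'.symm
      rcases this with h | h
      · exact Or.inl (fract_eq hu0 hu1 h0 (h1.trans h2) h)
      · exact Or.inr (fract_eq hu0 hu1 (h0.trans h1.le) h2 h)
  let ZS : Set (ℝ × ℝ) := {p | 0 ≤ p.1 ∧ p.1 < p.2 ∧ p.2 < 1 ∧ c p.1 = c p.2}
  have hmaps : MapsTo (fun p : ℝ × ℝ => c p.1) ZS {q : ℂ | γ.SelfIntersection q} :=
    fun p hp => (hD _ _ hp.1 hp.2.1 hp.2.2.1 hp.2.2.2).2.1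
  have hinj : InjOn (fun p : ℝ × ℝ => c p.1) ZS := by
    rintro ⟨s, t⟩ ⟨h0, h1, h2, h3⟩ ⟨s', t'⟩ ⟨k0, k1, k2, k3⟩ he
    simp only at h0 h1 h2 h3 k0 k1 k2 k3 he
    have hu := (hD _ _ h0 h1 h2 h3).2.2
    have a1 := hu s' k0 (k1.trans k2) he.symm
    have a2 := hu t' (k0.trans k1.le) k2 (k3.symm.trans he.symm)
    have : s' = s ∧ t' = t := by
      rcases a1 with a1 | a1 <;> rcases a2 with a2 | a2
      · linarith
      · exact ⟨a1, a2⟩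
      · linarith
      · linarith
    rw [this.1, this.2]
  have hZfin : ZS.Finite := hfin.of_injOn hmaps hinj
  have hcard : ZS.encard ≤ {q : ℂ | γ.SelfIntersection q}.encard :=
    encard_le_encard_of_injOn hmaps hinj
  have hθper : θ (t₀ + 1) - θ (t₀ + 0) = 2 * Real.pi * ((1 - 2 * (g : ℤ) : ℤ) : ℝ) := by
    rw [← hn]
    have := const_of_int (f := fun t => θ (t + 1) - θ t) (s := univ) isPreconnected_univ
      (by fun_prop) ?_ (mem_univ t₀) (mem_univ 0)
    · simpa using this
    · intro t _
      refine exp_same (norm_pos_iff.2 (γ.deriv_ne_zero t)) (norm_pos_iff.2 (γ.deriv_ne_zero t)) ?_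
      rw [← hθ' t]
      have := hθ' (t + 1)
      rw [hdper] at this
      exact this.symm
  have hmain := main_c (c := c) (γ.smooth.comp (contDiff_const.add contDiff_id))
    (fun t => by simp only [c]; rw [← add_assoc]; exact hper _)
    (fun t => by rw [hcd]; exact γ.deriv_ne_zero _)
    (fun t => by simp only [c, add_zero]; exact hmin _)
    (fun s t h0 h1 h2 h3 => (hD s t h0 h1 h2 h3).1)
    hZfin.toFinset
    (fun s t h0 h1 h2 h3 => hZfin.mem_toFinset.2 ⟨h0, h1, h2, h3⟩)
    (fun p hp => hZfin.mem_toFinset.1 hp)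
    (fun t => θ (t₀ + t)) (by fun_prop)
    (fun t => by rw [hcd]; exact hθ' _) _ hθper
  refine le_trans ?_ hcard
  rw [hZfin.encard_eq_coe_toFinset_card]
  rw [abs_le] at hmain
  norm_cast
  omega
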